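/- Let A be an affine domain over ℂ, I ⊆ A an ideal, f ∈ I nonzero, and φ an automorphism of A with φ(I) = I and φ(f) = α f for an invertible α ∈ A. Then φ extends uniquely to an automorphism φ' of A' = A[I/f]. -/

import Mathlib

/-!
An isomorphism `φ : A ≃+* B` extends to the total fraction rings. If `φ(I) = J` and `φ(f)` is an
associate of `g`, say `g = u φ(f)`, the extension sends `a / f` to `u φ(a) / g`, so it maps `A[I/f]`
onto `B[J/g]`. The lift is unique because every element of `A[I/f]` has a multiple in `A` by a
non-zero-divisor, and that factor is invertible in the total fraction ring.
-/

open nonZeroDivisors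

section Adjoin

variable {A B K L : Type*} [CommRing A] [CommRing B] [CommRing K] [CommRing L]
  [Algebra A K] [Algebra B L]

theorem toSubring_map_adjoin {φ : A →+* B} (hφ : Function.Surjective φ) {Φ : K →+* L}
    (hΦ : Φ.comp (algebraMap A K) = (algebraMap B L).comp φ) (s : Set K) :
    (Algebra.adjoin A s).toSubring.map Φ = (Algebra.adjoin B (Φ '' s)).toSubring := by
  have range_eq : Φ '' Set.range (algebraMap A K) = Set.range (algebraMap B L) := by
    rw [← Set.range_comp, ← RingHom.coe_comp, hΦ, RingHom.coe_comp, hφ.range_comp]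
  rw [Algebra.adjoin_eq_ring_closure, Algebra.adjoin_eq_ring_closure, RingHom.map_closure,
    Set.image_union, range_eq]

end Adjoin

theorem ringEquiv_ext_of_subalgebra_localization {A K R : Type*} [CommRing A] [CommRing K]
    [Algebra A K] (M : Submonoid A) [IsLocalization M K] {S : Subalgebra A K} [Mul R] [Add R]
    {e₁ e₂ : S ≃+* R} (h : ∀ a : A, e₁ (algebraMap A S a) = e₂ (algebraMap A S a)) :
    e₁ = e₂ := by
  let σ : S ≃+* S := e₁.trans e₂.symm
  have σ_algebraMap (a : A) : σ (algebraMap A S a) = algebraMap A S a :=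
    e₂.symm_apply_eq.mpr (h a)
  suffices σ_apply : ∀ x, σ x = x from RingEquiv.ext fun x => e₂.symm_apply_eq.mp (σ_apply x)
  intro x
  obtain ⟨⟨a, m⟩, hx⟩ := IsLocalization.surj M (x : K)
  have mul_eq : x * algebraMap A S m = algebraMap A S a := Subtype.ext hx
  have σ_mul_eq : σ x * algebraMap A S m = x * algebraMap A S m := by
    rw [← σ_algebraMap m, ← map_mul, mul_eq, σ_algebraMap, σ_algebraMap, mul_eq]
  exact Subtype.ext <|
    (IsLocalization.map_units K m).mul_right_cancel (congrArg Subtype.val σ_mul_eq)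

section TotalFractionRing

variable {A B K L : Type*} [CommRing A] [CommRing B] [CommRing K] [CommRing L]
  [Algebra A K] [IsFractionRing A K] [Algebra B L] [IsFractionRing B L]

theorem ringEquivOfRingEquiv_mk' (φ : A ≃+* B) {f : A⁰} {g : B⁰} (hf : φ f = g) (a : A) :
    (IsFractionRing.ringEquivOfRingEquiv φ : K ≃+* L) (IsLocalization.mk' K a f) =
      IsLocalization.mk' L (φ a) g := by
  rw [IsLocalization.eq_mk'_iff_mul_eq, ← hf,
    ← IsFractionRing.ringEquivOfRingEquiv_algebraMap (K := K),
    ← IsFractionRing.ringEquivOfRingEquiv_algebraMap (K := K), ← map_mul, IsLocalization.mk'_spec]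

variable (K) in
/-- The affine modification `A[I/f]` of `A` with center `I` and divisor `f`, as a subalgebra of the
total fraction ring `K` of `A`: it is generated by the fractions `a / f` with `a ∈ I`. -/
def affineModification (I : Ideal A) (f : A⁰) : Subalgebra A K :=
  Algebra.adjoin A ((fun a => IsLocalization.mk' K a f) '' (I : Set A))

namespace affineModification

theorem le_of_dvd {I : Ideal A} {f g : A⁰} (h : (f : A) ∣ g) :
    affineModification K I f ≤ affineModification K I g := by
  obtain ⟨u, hu⟩ := h
  refine Algebra.adjoin_mono ?_
  rintro _ ⟨a, ha, rfl⟩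
  refine ⟨u * a, I.mul_mem_left u ha, IsLocalization.mk'_eq_of_eq ?_⟩
  rw [hu, mul_assoc]

theorem eq_of_associated {I : Ideal A} {f g : A⁰} (h : Associated (f : A) g) :
    affineModification K I f = affineModification K I g :=
  le_antisymm (le_of_dvd h.dvd) (le_of_dvd h.symm.dvd)

theorem toSubring_map (φ : A ≃+* B) (I : Ideal A) {f : A⁰} {g : B⁰} (hf : φ f = g) :
    (affineModification K I f).toSubring.map
        (IsFractionRing.ringEquivOfRingEquiv φ : K ≃+* L).toRingHom =
      (affineModification L (I.map (φ : A →+* B)) g).toSubring := by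
  have comp_algebraMap :
      (IsFractionRing.ringEquivOfRingEquiv φ : K ≃+* L).toRingHom.comp (algebraMap A K) =
        (algebraMap B L).comp (φ : A →+* B) :=
    RingHom.ext (IsFractionRing.ringEquivOfRingEquiv_algebraMap φ)
  have coe_map : (I.map (φ : A →+* B) : Set B) = φ '' I :=
    Set.ext fun _ => Ideal.mem_map_of_equiv φ _
  rw [affineModification, affineModification, toSubring_map_adjoin φ.surjective comp_algebraMap,
    coe_map, Set.image_image, Set.image_image]
  exact congrArg (fun s => (Algebra.adjoin B s).toSubring)
    (Set.image_congr fun a _ => ringEquivOfRingEquiv_mk' φ hf a)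

theorem mem_iff_ringEquivOfRingEquiv_mem (φ : A ≃+* B) {I : Ideal A} {J : Ideal B} {f : A⁰}
    {g : B⁰} (hI : I.map (φ : A →+* B) = J) (hf : Associated (φ f) (g : B)) (x : K) :
    x ∈ affineModification K I f ↔
      (IsFractionRing.ringEquivOfRingEquiv φ : K ≃+* L) x ∈ affineModification L J g := by
  let φf : B⁰ := ⟨φ f, MulEquivClass.map_nonZeroDivisors φ ▸ Submonoid.mem_map_of_mem φ f.2⟩
  have map_eq : (affineModification K I f).toSubring.map
      (IsFractionRing.ringEquivOfRingEquiv φ : K ≃+* L).toRingHom =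
        (affineModification L J g).toSubring := by
    rw [toSubring_map (g := φf) φ I rfl, hI, eq_of_associated (g := g) hf]
  rw [← Subalgebra.mem_toSubring, ← Subalgebra.mem_toSubring, ← map_eq]
  exact ((IsFractionRing.ringEquivOfRingEquiv φ).injective.mem_set_image).symm

end affineModification

theorem stmt_8_general (φ : A ≃+* B) {I : Ideal A} {J : Ideal B} {f : A⁰} {g : B⁰}
    (hI : I.map (φ : A →+* B) = J) (hf : Associated (φ f) (g : B)) :
    ∃! φ' : affineModification K I f ≃+* affineModification L J g,
      ∀ a : A, φ' (algebraMap A _ a) = algebraMap B _ (φ a) := by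
  let Φ : K ≃+* L := IsFractionRing.ringEquivOfRingEquiv φ
  refine ⟨Φ.restrict _ _ (affineModification.mem_iff_ringEquivOfRingEquiv_mem φ hI hf),
    fun a => Subtype.ext (IsFractionRing.ringEquivOfRingEquiv_algebraMap φ a), fun ψ hψ => ?_⟩
  refine ringEquiv_ext_of_subalgebra_localization A⁰ fun a => (hψ a).trans ?_
  exact Subtype.ext (IsFractionRing.ringEquivOfRingEquiv_algebraMap φ a).symm

end TotalFractionRing

theorem affineModification_eq_adjoin_div {A K : Type*} [CommRing A] [Field K] [Algebra A K]
    [IsFractionRing A K] (I : Ideal A) (f : A⁰) :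
    affineModification K I f =
      Algebra.adjoin A ((fun a => algebraMap A K a / algebraMap A K f) '' (I : Set A)) := by
  simp only [affineModification, IsFractionRing.mk'_eq_div]

/-- Lifting automorphisms to an affine modification: an automorphism `φ` of `A` with
`φ(I) = I` and `φ(f) = α f`, `α` invertible, extends uniquely to an automorphism of
`A' = A[I/f]`. -/
theorem stmt_8 {A : Type*} [CommRing A] [IsDomain A] [Algebra ℂ A]
    (hA : Algebra.FiniteType ℂ A)
    (I : Ideal A) (f : A) (hfI : f ∈ I) (hf0 : f ≠ 0)
    (φ : A ≃+* A) (hφI : Ideal.map (φ : A →+* A) I = I)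
    (α : A) (hα : IsUnit α) (hφf : φ f = α * f) :
    letI K := FractionRing A
    letI A' : Subalgebra A K :=
      Algebra.adjoin A ((fun a => algebraMap A K a / algebraMap A K f) '' (I : Set A))
    ∃! φ' : A' ≃+* A',
      ∀ a : A,
        φ' ⟨algebraMap A K a, Subalgebra.algebraMap_mem _ a⟩ =
          ⟨algebraMap A K (φ a), Subalgebra.algebraMap_mem _ (φ a)⟩ := by
  rw [← affineModification_eq_adjoin_div I ⟨f, mem_nonZeroDivisors_of_ne_zero hf0⟩]
  exact stmt_8_general φ hφI (hφf ▸ associated_unit_mul_left f α hα)
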